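/- Let 1 ≤ m ≤ n, let φ be an alternating m-form on ℝ^n, let v₁,…,v_m ∈ ℝ^n be linearly independent with φ(v₁,…,v_m) = 1, set V = span{v₁,…,v_m}, and let W be the unique complementary subspace to V such that φ(v₁,…,v_{i−1}, w, v_{i+1},…,v_m) = 0 for every i ∈ {1,…,m} and w ∈ W. Let g be an inner product on ℝ^n for which V and W are orthogonal and Gram_g(v₁,…,v_m) = 1, and let K = sup{ φ(u₁,…,u_m) : u₁,…,u_m ∈ ℝ^n, Gram_g(u₁,…,u_m) = 1 } be the comass of φ with respect to g. Choose any constant C with C² > (n choose m)·K and define a new inner product g' on ℝ^n = V ⊕ W by g'(x,y) = g(x_V, y_V) + C²·g(x_W, y_W), where x = x_V + x_W with x_V ∈ V, x_W ∈ W. Then the comass of φ with respect to g' equals 1; moreover φ(v₁,…,v_m) = 1 = Gram_{g'}(v₁,…,v_m), so the comass is attained at (v₁,…,v_m). -/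

import Mathlib

/-- The Gram determinant of the vectors `v 0, …, v (m-1)` with respect to a
pairing `g` on `ℝ^n`. -/
noncomputable def gram {n m : ℕ} (g : (Fin n → ℝ) → (Fin n → ℝ) → ℝ)
    (v : Fin m → (Fin n → ℝ)) : ℝ :=
  (Matrix.of fun i j => g (v i) (v j)).det

/-- `g` is an inner product on `ℝ^n`: a symmetric bilinear form which is
positive definite. -/
def IsInnerProduct {n : ℕ} (g : (Fin n → ℝ) → (Fin n → ℝ) → ℝ) : Prop :=
  (∀ x y, g x y = g y x) ∧ (∀ x, IsLinearMap ℝ (g x)) ∧ ∀ v, v ≠ 0 → 0 < g v v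

/-! Let `b₁, …, b_m` be `g'`-orthonormal with span `U`, and split `bᵢ = pᵢ + qᵢ` along `V ⊕ W`. Put
`cᵢ = |pᵢ|_g` and `sᵢ = |C| |qᵢ|_g`, so that `cᵢ² + sᵢ² = 1`, and expand
`φ(b₁, …, b_m) = ∑ φ_S`, where `φ_S` takes `qᵢ` for `i ∈ S` and `pᵢ` for `i ∉ S`.

* On `V` the form `φ` is, up to sign, the volume form of `g`, so Hadamard's inequality bounds `φ_∅`
  by `∏ cᵢ`.
* The terms with `|S| = 1` vanish by the choice of `W`.
* If `2 ≤ |S|`, then by Hadamard again `|φ_S| ≤ K |C|^{-|S|} ∏_{i ∈ S} sᵢ ∏_{i ∉ S} cᵢ`. Since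
  `1 ≤ |C|` and `cᵢ cⱼ + sᵢ sⱼ ≤ 1` for any two indices of `S`, `|φ_S| ≤ (K / C²) (1 - ∏ cᵢ)`.

A basis of `U` adapted to `U ∩ V` has at most `r = min (m, n - m)` vectors with `qᵢ ≠ 0`, so there
are at most `2^r` nonzero terms, and `2^r K ≤ (n choose m) K < C²`. The sum of all the bounds is
then at most `∏ cᵢ + (1 - ∏ cᵢ) = 1`. -/

theorem two_pow_le_choose_add {r a b : ℕ} (ha : r ≤ a) (hb : r ≤ b) : 2 ^ r ≤ (a + b).choose a := by
  induction r generalizing a b with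
  | zero => exact Nat.choose_pos (Nat.le_add_right a b)
  | succ r ih =>
    obtain ⟨a, rfl⟩ : ∃ k, a = k + 1 := ⟨a - 1, by omega⟩
    calc 2 ^ (r + 1) = 2 ^ r + 2 ^ r := by ring
      _ ≤ (a + b).choose a + (a + b).choose (a + 1) := by
        refine add_le_add (ih (by omega) (by omega)) ?_
        obtain ⟨b, rfl⟩ : ∃ k, b = k + 1 := ⟨b - 1, by omega⟩
        rw [← add_assoc, add_right_comm]
        exact ih (by omega) (by omega)
      _ = (a + 1 + b).choose (a + 1) := by rw [add_right_comm, Nat.choose_succ_succ']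

theorem two_pow_min_le_choose {m n : ℕ} (h : m ≤ n) : 2 ^ min m (n - m) ≤ n.choose m := by
  simpa only [Nat.add_sub_cancel' h] using
    two_pow_le_choose_add (min_le_left m (n - m)) (min_le_right m (n - m))

section Expansion

variable {ι : Type*} [DecidableEq ι]

theorem multilinearMap_add_eq_sum_powerset [Finite ι] {R N : Type*} {M : ι → Type*}
    [Semiring R] [∀ i, AddCommMonoid (M i)] [∀ i, Module R (M i)] [AddCommMonoid N] [Module R N]
    (f : MultilinearMap R M N) (p : ∀ i, M i) {q : ∀ i, M i} {T : Finset ι}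
    (hq : ∀ i ∉ T, q i = 0) :
    f (q + p) = ∑ S ∈ T.powerset, f (S.piecewise q p) := by
  have := Fintype.ofFinite ι
  rw [f.map_add_univ]
  refine (Finset.sum_subset (Finset.subset_univ _) fun S _ hS ↦ ?_).symm
  obtain ⟨i, hiS, hiT⟩ := Finset.not_subset.mp (mt Finset.mem_powerset.mpr hS)
  exact f.map_coord_zero i (by simp [hiS, hq i hiT])

variable [Fintype ι]

theorem prod_add_prod_piecewise_le_one {c s : ι → ℝ} (hc : ∀ i, 0 ≤ c i) (hs : ∀ i, 0 ≤ s i)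
    (hcs : ∀ i, c i ^ 2 + s i ^ 2 ≤ 1) {S : Finset ι} (hS : 1 < S.card) :
    ∏ i, c i + ∏ i, S.piecewise s c i ≤ 1 := by
  obtain ⟨i, hi, j, hj, hij⟩ := Finset.one_lt_card.mp hS
  have hprod {a : ι → ℝ} (ha : ∀ k, 0 ≤ a k ∧ a k ≤ 1) : ∏ k, a k ≤ a i * a j := by
    rw [← Finset.prod_pair hij]
    exact Finset.prod_le_prod_of_subset_of_le_one (Finset.subset_univ _)
      (fun k _ ↦ (ha k).1) fun k _ _ ↦ (ha k).2
  have hc' (k : ι) : 0 ≤ c k ∧ c k ≤ 1 := ⟨hc k, by nlinarith [hcs k, hc k, sq_nonneg (s k)]⟩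
  have hs' (k : ι) : 0 ≤ s k ∧ s k ≤ 1 := ⟨hs k, by nlinarith [hcs k, hs k, sq_nonneg (c k)]⟩
  have hcs' (k : ι) : 0 ≤ S.piecewise s c k ∧ S.piecewise s c k ≤ 1 :=
    S.piecewise_cases s c (fun t ↦ 0 ≤ t ∧ t ≤ 1) (hs' k) (hc' k)
  calc ∏ k, c k + ∏ k, S.piecewise s c k ≤ c i * c j + s i * s j := by
        simpa [hi, hj] using add_le_add (hprod hc') (hprod hcs')
    _ ≤ 1 := by nlinarith [sq_nonneg (c i - c j), sq_nonneg (s i - s j), hcs i, hcs j]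

theorem pow_mul_prod_piecewise_le {A : ℝ} (hA : 1 ≤ A) {c d : ι → ℝ} (hc : ∀ i, 0 ≤ c i)
    (hd : ∀ i, 0 ≤ d i) {S : Finset ι} {k : ℕ} (hS : k ≤ S.card) :
    A ^ k * ∏ i, S.piecewise d c i ≤ ∏ i, S.piecewise (A • d) c i := by
  have hprod : 0 ≤ ∏ i, S.piecewise d c i :=
    Finset.prod_nonneg fun i _ ↦ S.piecewise_cases d c (0 ≤ ·) (hd i) (hc i)
  calc A ^ k * ∏ i, S.piecewise d c i ≤ A ^ S.card * ∏ i, S.piecewise d c i := by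
        gcongr
    _ = ∏ i, S.piecewise (A • d) c i := by
        simp [Finset.prod_piecewise, Finset.prod_mul_distrib, mul_assoc]

theorem abs_multilinearMap_add_le_one {M : ι → Type*} [∀ i, AddCommMonoid (M i)]
    [∀ i, Module ℝ (M i)] (f : MultilinearMap ℝ M ℝ) {p q : ∀ i, M i} {T : Finset ι}
    (hq : ∀ i ∉ T, q i = 0) {c s : ι → ℝ} (hc : ∀ i, 0 ≤ c i) (hs : ∀ i, 0 ≤ s i)
    (hcs : ∀ i, c i ^ 2 + s i ^ 2 ≤ 1) (hf₀ : |f p| ≤ ∏ i, c i)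
    (hf₁ : ∀ i, f (Function.update p i (q i)) = 0) {δ : ℝ} (hδ : 0 ≤ δ) (hTδ : 2 ^ T.card * δ ≤ 1)
    (hf₂ : ∀ S : Finset ι, 1 < S.card → |f (S.piecewise q p)| ≤ δ * ∏ i, S.piecewise s c i) :
    |f (q + p)| ≤ 1 := by
  have hc₁ : ∏ i, c i ≤ 1 := Finset.prod_le_one (fun i _ ↦ hc i) fun i _ ↦ by
    nlinarith [hcs i, hc i, sq_nonneg (s i)]
  have hterm {S : Finset ι} (hS : S ≠ ∅) : |f (S.piecewise q p)| ≤ δ * (1 - ∏ i, c i) := by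
    obtain hcard | hcard := (Finset.one_le_card.mpr (Finset.nonempty_iff_ne_empty.mpr hS)).eq_or_lt
    · obtain ⟨i, rfl⟩ := Finset.card_eq_one.mp hcard.symm
      rw [Finset.piecewise_singleton, hf₁, abs_zero]
      exact mul_nonneg hδ (sub_nonneg.mpr hc₁)
    · refine (hf₂ S hcard).trans (mul_le_mul_of_nonneg_left ?_ hδ)
      linarith [prod_add_prod_piecewise_le_one hc hs hcs hcard]
  have hsum : ∑ S ∈ T.powerset.erase ∅, |f (S.piecewise q p)| ≤ 1 - ∏ i, c i :=
    calc ∑ S ∈ T.powerset.erase ∅, |f (S.piecewise q p)|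
        ≤ ∑ S ∈ T.powerset.erase ∅, δ * (1 - ∏ i, c i) :=
          Finset.sum_le_sum fun S hS ↦ hterm (Finset.ne_of_mem_erase hS)
      _ ≤ ∑ S ∈ T.powerset, δ * (1 - ∏ i, c i) :=
          Finset.sum_le_sum_of_subset_of_nonneg (Finset.erase_subset _ _) fun _ _ _ ↦
            mul_nonneg hδ (sub_nonneg.mpr hc₁)
      _ = 2 ^ T.card * δ * (1 - ∏ i, c i) := by simp [mul_assoc]
      _ ≤ 1 - ∏ i, c i := mul_le_of_le_one_left (sub_nonneg.mpr hc₁) hTδ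
  calc |f (q + p)| ≤ ∑ S ∈ T.powerset, |f (S.piecewise q p)| := by
        rw [multilinearMap_add_eq_sum_powerset f p hq]
        exact Finset.abs_sum_le_sum_abs _ _
    _ = |f p| + ∑ S ∈ T.powerset.erase ∅, |f (S.piecewise q p)| := by
        rw [← Finset.add_sum_erase _ _ (Finset.empty_mem_powerset T), Finset.piecewise_empty]
    _ ≤ 1 := by linarith

end Expansion

section AlternatingMap

variable {R M N ι : Type*} [CommRing R] [AddCommGroup M] [Module R M] [AddCommGroup N] [Module R N]

theorem alternatingMap_sum_smul_eq_det_smul [Fintype ι] [DecidableEq ι] (φ : M [⋀^ι]→ₗ[R] N)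
    (c : ι → ι → R) (v : ι → M) :
    φ (fun i ↦ ∑ j, c i j • v j) = (Matrix.of c).det • φ v := by
  let e := Pi.basisFun R ι
  have h : φ.compLinearMap (Fintype.linearCombination R v) =
      (LinearMap.toSpanSingleton R N (φ v)).compAlternatingMap e.det := by
    refine Module.Basis.ext_alternating e fun r hr ↦ ?_
    let σ : Equiv.Perm ι := Equiv.ofBijective r (Finite.injective_iff_bijective.mp hr)
    have he : (fun i ↦ e (r i)) = e ∘ σ := rfl
    rw [he, AlternatingMap.map_perm, AlternatingMap.map_perm,
      LinearMap.compAlternatingMap_apply, e.det_self]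
    simp [e]
  calc φ (fun i ↦ ∑ j, c i j • v j)
      = φ.compLinearMap (Fintype.linearCombination R v) c := by
        simp [Fintype.linearCombination_apply]
    _ = e.det c • φ v := by rw [h]; rfl
    _ = (Matrix.of c).det • φ v := by rw [Pi.basisFun_det_apply]

theorem alternatingMap_update_eq_zero_of_mem_span {k : ℕ} {φ : M [⋀^Fin k]→ₗ[R] N}
    {v x : Fin k → M} {w : M} (hw : ∀ i, φ (Function.update v i w) = 0)
    (hx : ∀ i, x i ∈ Submodule.span R (Set.range v)) (i : Fin k) :
    φ (Function.update x i w) = 0 := by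
  obtain _ | k := k
  · exact i.elim0
  have h : (φ.curryLeft w).compLinearMap (Fintype.linearCombination R v) = 0 := by
    refine Module.Basis.ext_alternating (Pi.basisFun R (Fin (k + 1))) fun r hr ↦ ?_
    -- With `j` the index missed by `r`, the family `(w, v ∘ r)` is a permutation of `v` with `w` in
    -- place of `v j`.
    obtain ⟨j, hj⟩ : ∃ j, j ∉ Set.range r := by
      by_contra! hsurj
      simpa using Fintype.card_le_of_surjective r hsurj
    let σ : Equiv.Perm (Fin (k + 1)) := Equiv.ofBijective (Fin.cons j r)
      (Finite.injective_iff_bijective.mp (Fin.cons_injective_iff.mpr ⟨hj, hr⟩))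
    have hσ : Matrix.vecCons w (fun l ↦ v (r l)) = Function.update v j w ∘ σ := by
      funext l
      cases l using Fin.cases with
      | zero => simp [σ]
      | succ l => simp [σ, Function.update_of_ne (show r l ≠ j from fun h ↦ hj ⟨l, h⟩)]
    have hφ : φ (Matrix.vecCons w fun l ↦ v (r l)) = 0 := by
      rw [hσ, AlternatingMap.map_perm, hw, smul_zero]
    simpa using hφ
  choose c hc using fun j ↦ (Submodule.mem_span_range_iff_exists_fun R).mp (hx j)
  have hx : φ (Matrix.vecCons w (i.removeNth x)) = 0 := by
    have hx' : i.removeNth x = fun j ↦ ∑ l, i.removeNth c j l • v l := funext fun j ↦ (hc _).symm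
    simpa [Fintype.linearCombination_apply, hx'] using congr($h (i.removeNth c))
  rw [← Fin.insertNth_removeNth, AlternatingMap.map_insertNth, hx, smul_zero]

end AlternatingMap

section Orthonormal

variable {𝕜 E ι : Type*} [RCLike 𝕜] [NormedAddCommGroup E] [InnerProductSpace 𝕜 E]
  [FiniteDimensional 𝕜 E]

theorem exists_orthonormalBasis_ncard_notMem_add_finrank_le [Fintype ι]
    (D : Submodule 𝕜 E) (hι : Module.finrank 𝕜 E = Fintype.card ι) :
    ∃ b : OrthonormalBasis ι 𝕜 E, {i | b i ∉ D}.ncard + Module.finrank 𝕜 D ≤ Fintype.card ι := by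
  have hD := D.finrank_add_finrank_orthogonal
  let f : Fin (Module.finrank 𝕜 D) ⊕ Fin (Module.finrank 𝕜 Dᗮ) ≃ ι :=
    Fintype.equivOfCardEq (by simp [hD, hι])
  let b := (((stdOrthonormalBasis 𝕜 D).prod (stdOrthonormalBasis 𝕜 Dᗮ)).map
    D.orthogonalDecomposition.symm).reindex f
  have hb : {i | b i ∉ D} ⊆ Set.range (f ∘ Sum.inr) := by
    intro i hi
    cases hfi : f.symm i with
    | inl j => exact absurd (by simp [b, hfi]) hi
    | inr j => exact ⟨j, by simp [← hfi]⟩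
  refine ⟨b, ?_⟩
  calc {i | b i ∉ D}.ncard + Module.finrank 𝕜 D
      ≤ (Set.range (f ∘ Sum.inr)).ncard + Module.finrank 𝕜 D := by
        gcongr
        exact Set.toFinite _
    _ ≤ Module.finrank 𝕜 Dᗮ + Module.finrank 𝕜 D := by
        gcongr
        simpa [Function.comp_def] using Set.ncard_image_le (f := f ∘ Sum.inr) (s := Set.univ)
    _ = Fintype.card ι := by rw [add_comm, hD, hι]

theorem exists_orthonormal_span_eq_ncard_notMem_add_finrank_le [Finite ι] (V : Submodule 𝕜 E)
    {u : ι → E} (hu : LinearIndependent 𝕜 u) :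
    ∃ b : ι → E, Orthonormal 𝕜 b ∧
      Submodule.span 𝕜 (Set.range b) = Submodule.span 𝕜 (Set.range u) ∧
      {i | b i ∉ V}.ncard + Module.finrank 𝕜 V ≤ Module.finrank 𝕜 E := by
  have := Fintype.ofFinite ι
  let U := Submodule.span 𝕜 (Set.range u)
  have hU : Module.finrank 𝕜 U = Fintype.card ι := finrank_span_eq_card hu
  obtain ⟨b, hb⟩ := exists_orthonormalBasis_ncard_notMem_add_finrank_le (V.comap U.subtype) hU
  have hspan : Submodule.span 𝕜 (Set.range (U.subtype ∘ b)) = U := by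
    rw [Set.range_comp, Submodule.span_image, ← b.coe_toBasis, b.toBasis.span_eq,
      Submodule.map_subtype_top]
  refine ⟨U.subtype ∘ b, b.orthonormal.comp_linearIsometry U.subtypeₗᵢ, hspan, ?_⟩
  have hVU : Module.finrank 𝕜 (V.comap U.subtype) = Module.finrank 𝕜 (U ⊓ V : Submodule 𝕜 E) := by
    rw [← Submodule.map_comap_subtype]
    exact (Submodule.equivMapOfInjective _ U.injective_subtype _).finrank_eq
  have hsum := Submodule.finrank_sup_add_finrank_inf_eq U V
  have hle := (U ⊔ V).finrank_le
  change {i | b i ∉ V.comap U.subtype}.ncard + _ ≤ _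
  omega

end Orthonormal

section ExteriorPower

variable {E : Type*} [NormedAddCommGroup E] [InnerProductSpace ℝ E] [FiniteDimensional ℝ E]
  {F : Type*} [NormedAddCommGroup F] [NormedSpace ℝ F] {m : ℕ}

theorem norm_ιMulti (x : Fin m → E) :
    ‖exteriorPower.ιMulti ℝ m x‖ = √(Matrix.gram ℝ x).det := by
  rw [norm_eq_sqrt_real_inner, exteriorPower.inner_ιMulti_self]

theorem norm_ιMulti_eq_one {b : Fin m → E} (hb : Orthonormal ℝ b) :
    ‖exteriorPower.ιMulti ℝ m b‖ = 1 := by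
  rw [norm_ιMulti, Matrix.gram_eq_one_iff_orthonormal.mpr hb, Matrix.det_one, Real.sqrt_one]

theorem norm_map_mul_norm_ιMulti (φ : E [⋀^Fin m]→ₗ[ℝ] F) {v x : Fin m → E}
    (hx : ∀ i, x i ∈ Submodule.span ℝ (Set.range v)) :
    ‖φ x‖ * ‖exteriorPower.ιMulti ℝ m v‖ = ‖φ v‖ * ‖exteriorPower.ιMulti ℝ m x‖ := by
  choose c hc using fun i ↦ (Submodule.mem_span_range_iff_exists_fun ℝ).mp (hx i)
  rw [← funext hc, alternatingMap_sum_smul_eq_det_smul φ, alternatingMap_sum_smul_eq_det_smul,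
    norm_smul, norm_smul]
  ring

theorem norm_ιMulti_le_prod (x : Fin m → E) : ‖exteriorPower.ιMulti ℝ m x‖ ≤ ∏ i, ‖x i‖ := by
  by_cases hx : LinearIndependent ℝ x
  · let U := Submodule.span ℝ (Set.range x)
    have hU : Module.finrank ℝ U = m := by simpa using finrank_span_eq_card hx
    have : Fact (Module.finrank ℝ U = m) := ⟨hU⟩
    let b := (stdOrthonormalBasis ℝ U).reindex (finCongr hU)
    let o := b.toBasis.orientation
    let y : Fin m → U := fun i ↦ ⟨x i, Submodule.subset_span ⟨i, rfl⟩⟩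
    have hb : Submodule.span ℝ (Set.range b) = ⊤ := by rw [← b.coe_toBasis, b.toBasis.span_eq]
    have h := norm_map_mul_norm_ιMulti o.volumeForm (v := b) (x := y) fun i ↦ hb ▸ Submodule.mem_top
    rw [norm_ιMulti_eq_one b.orthonormal, mul_one, Real.norm_eq_abs, Real.norm_eq_abs,
      o.abs_volumeForm_apply_of_orthonormal b, one_mul] at h
    calc ‖exteriorPower.ιMulti ℝ m x‖ = ‖exteriorPower.ιMulti ℝ m y‖ := by
          rw [norm_ιMulti, norm_ιMulti]
          rfl
      _ = |o.volumeForm y| := h.symm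
      _ ≤ ∏ i, ‖x i‖ := o.abs_volumeForm_apply_le y
  · rw [AlternatingMap.map_linearDependent _ x hx, norm_zero]
    positivity

theorem exists_norm_map_le_mul_norm_ιMulti (φ : E [⋀^Fin m]→ₗ[ℝ] F) :
    ∃ B, ∀ x, ‖φ x‖ ≤ B * ‖exteriorPower.ιMulti ℝ m x‖ := by
  let L := (exteriorPower.alternatingMapLinearEquiv φ).toContinuousLinearMap
  refine ⟨‖L‖, fun x ↦ ?_⟩
  simpa [L] using L.le_opNorm (exteriorPower.ιMulti ℝ m x)

theorem abs_map_le_mul_norm_ιMulti [NeZero m] {φ : E [⋀^Fin m]→ₗ[ℝ] ℝ} {K : ℝ}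
    (hK : ∀ u, ‖exteriorPower.ιMulti ℝ m u‖ = 1 → φ u ≤ K) (x : Fin m → E) :
    |φ x| ≤ K * ‖exteriorPower.ιMulti ℝ m x‖ := by
  obtain hx | hx := eq_or_ne (exteriorPower.ιMulti ℝ m x) 0
  · obtain ⟨B, hB⟩ := exists_norm_map_le_mul_norm_ιMulti φ
    simpa [hx] using hB x
  have hx' := norm_pos_iff.mpr hx
  have hscale (a : ℝ) (ha : |a| = ‖exteriorPower.ιMulti ℝ m x‖⁻¹) : a * φ x ≤ K := by
    have h := hK (Function.update x 0 (a • x 0))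
    rw [AlternatingMap.map_update_smul, AlternatingMap.map_update_smul, Function.update_eq_self,
      norm_smul, Real.norm_eq_abs, ha, inv_mul_cancel₀ hx'.ne'] at h
    exact h rfl
  have hpos := hscale ‖exteriorPower.ιMulti ℝ m x‖⁻¹ (by simp)
  have hneg := hscale (-‖exteriorPower.ιMulti ℝ m x‖⁻¹) (by simp)
  rw [← div_le_iff₀ hx', div_eq_inv_mul, ← abs_of_pos (inv_pos.mpr hx'), ← abs_mul, abs_le']
  exact ⟨hpos, by simpa using hneg⟩

end ExteriorPower

/-- The comass of `φ` with respect to `g`. As a real supremum it takes the junk value `0` when the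
set of values is empty or unbounded. -/
noncomputable def comass {n m : ℕ} (g : (Fin n → ℝ) → (Fin n → ℝ) → ℝ)
    (φ : (Fin n → ℝ) [⋀^Fin m]→ₗ[ℝ] ℝ) : ℝ :=
  sSup {r : ℝ | ∃ u : Fin m → (Fin n → ℝ), gram g u = 1 ∧ φ u = r}

/-- The form obtained from `g` by rescaling by `C` along the kernel of the projection `P`: for `P`
the projection onto `V` along `W` this is `g(x_V, y_V) + C² g(x_W, y_W)`. -/
def rescale {n : ℕ} (g : (Fin n → ℝ) → (Fin n → ℝ) → ℝ) (P : Module.End ℝ (Fin n → ℝ)) (C : ℝ)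
    (x y : Fin n → ℝ) : ℝ :=
  g (P x) (P y) + C ^ 2 * g (x - P x) (y - P y)

theorem gram_rescale {n m : ℕ} (g : (Fin n → ℝ) → (Fin n → ℝ) → ℝ) {P : Module.End ℝ (Fin n → ℝ)}
    (C : ℝ) (hg : g 0 0 = 0) {v : Fin m → Fin n → ℝ} (hv : ∀ i, P (v i) = v i) :
    gram (rescale g P C) v = gram g v := by
  simp [gram, rescale, hv, hg]

namespace IsInnerProduct

variable {n m : ℕ} {g : (Fin n → ℝ) → (Fin n → ℝ) → ℝ}

/-- The inner product space structure on `ℝ^n` whose inner product is `g`, giving access to the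
library's results on inner product spaces. It is a `Core` because the norm already carried by
`Fin n → ℝ` is the sup norm. -/
abbrev core (hg : IsInnerProduct g) : InnerProductSpace.Core ℝ (Fin n → ℝ) where
  inner := g
  conj_inner_symm x y := hg.1 y x
  re_inner_nonneg x := by
    obtain rfl | hx := eq_or_ne x 0
    · simp [(hg.2.1 0).map_zero]
    · simpa using (hg.2.2 x hx).le
  add_left x y z := by simp only [hg.1 _ z, (hg.2.1 z).map_add]
  smul_left x y r := by simp [hg.1 _ y, (hg.2.1 y).map_smul]
  definite x hx := by
    by_contra h
    exact (hg.2.2 x h).ne' hx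

theorem self_nonneg (hg : IsInnerProduct g) (x : Fin n → ℝ) : 0 ≤ g x x :=
  hg.core.re_inner_nonneg x

theorem abs_map_mul_sqrt_gram (hg : IsInnerProduct g)
    (φ : (Fin n → ℝ) [⋀^Fin m]→ₗ[ℝ] ℝ) {v x : Fin m → Fin n → ℝ}
    (hx : ∀ i, x i ∈ Submodule.span ℝ (Set.range v)) :
    |φ x| * √(gram g v) = |φ v| * √(gram g x) := by
  let := hg.core.toNormedAddCommGroup
  let := InnerProductSpace.ofCore hg.core.toCore
  have h := norm_map_mul_norm_ιMulti φ hx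
  rw [norm_ιMulti, norm_ιMulti] at h
  exact h

theorem sqrt_gram_le_prod (hg : IsInnerProduct g) (x : Fin m → Fin n → ℝ) :
    √(gram g x) ≤ ∏ i, √(g (x i) (x i)) := by
  let := hg.core.toNormedAddCommGroup
  let := InnerProductSpace.ofCore hg.core.toCore
  have h := norm_ιMulti_le_prod x
  rw [norm_ιMulti] at h
  exact h

theorem map_le_comass (hg : IsInnerProduct g) (φ : (Fin n → ℝ) [⋀^Fin m]→ₗ[ℝ] ℝ)
    {u : Fin m → Fin n → ℝ} (hu : gram g u = 1) : φ u ≤ comass g φ := by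
  let := hg.core.toNormedAddCommGroup
  let := InnerProductSpace.ofCore hg.core.toCore
  obtain ⟨B, hB⟩ := exists_norm_map_le_mul_norm_ιMulti φ
  refine le_csSup ⟨B, ?_⟩ ⟨u, hu, rfl⟩
  rintro _ ⟨x, hx, rfl⟩
  have hx' : ‖exteriorPower.ιMulti ℝ m x‖ = 1 := (norm_ιMulti x).trans (Real.sqrt_eq_one.mpr hx)
  simpa [hx'] using (le_abs_self _).trans (hB x)

theorem abs_map_le_comass_mul_sqrt_gram [NeZero m] (hg : IsInnerProduct g)
    (φ : (Fin n → ℝ) [⋀^Fin m]→ₗ[ℝ] ℝ) (x : Fin m → Fin n → ℝ) :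
    |φ x| ≤ comass g φ * √(gram g x) := by
  let := hg.core.toNormedAddCommGroup
  let := InnerProductSpace.ofCore hg.core.toCore
  have h := abs_map_le_mul_norm_ιMulti (φ := φ) (K := comass g φ)
    (fun u hu ↦ hg.map_le_comass φ (Real.sqrt_eq_one.mp ((norm_ιMulti u).symm.trans hu))) x
  rw [norm_ιMulti] at h
  exact h

theorem exists_gram_eq_one_and_ncard_notMem_add_finrank_le (hg : IsInnerProduct g)
    (V : Submodule ℝ (Fin n → ℝ)) {u : Fin m → Fin n → ℝ} (hu : LinearIndependent ℝ u) :
    ∃ b : Fin m → Fin n → ℝ, (∀ i, g (b i) (b i) = 1) ∧ gram g b = 1 ∧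
      Submodule.span ℝ (Set.range b) = Submodule.span ℝ (Set.range u) ∧
      {i | b i ∉ V}.ncard + Module.finrank ℝ V ≤ n := by
  let := hg.core.toNormedAddCommGroup
  let := InnerProductSpace.ofCore hg.core.toCore
  obtain ⟨b, hb, hspan, hV⟩ := exists_orthonormal_span_eq_ncard_notMem_add_finrank_le V hu
  have hgram : Matrix.gram ℝ b = 1 := Matrix.gram_eq_one_iff_orthonormal.mpr hb
  refine ⟨b, fun i ↦ ?_, ?_, hspan, hV.trans_eq (Module.finrank_fin_fun ℝ)⟩
  · exact congr($hgram i i).trans (Matrix.one_apply_eq i)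
  · exact congr(Matrix.det $hgram).trans Matrix.det_one

protected theorem rescale (hg : IsInnerProduct g) (P : Module.End ℝ (Fin n → ℝ)) {C : ℝ}
    (hC : C ≠ 0) : IsInnerProduct (rescale g P C) := by
  have ⟨hsymm, hlin, hpos⟩ := hg
  refine ⟨fun x y ↦ ?_, fun x ↦ ?_, fun x hx ↦ ?_⟩
  · simp only [rescale, hsymm (P x), hsymm (x - P x)]
  · exact (((hlin _).mk'.comp P) + C ^ 2 • ((hlin _).mk'.comp (1 - P))).isLinear
  · have hP := hg.self_nonneg (P x)
    have hQ := hg.self_nonneg (x - P x)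
    unfold rescale
    obtain h | h := eq_or_ne (P x) 0
    · have := hpos (x - P x) (by rwa [h, sub_zero])
      positivity
    · have := hpos (P x) h
      positivity

theorem abs_map_piecewise_le (hg : IsInnerProduct g) {φ : (Fin n → ℝ) [⋀^Fin m]→ₗ[ℝ] ℝ}
    (hK : 0 ≤ comass g φ) {C : ℝ} (hC : 1 ≤ |C|) (p q : Fin m → Fin n → ℝ) {S : Finset (Fin m)}
    (hS : 1 < S.card) :
    |φ (S.piecewise q p)| ≤ comass g φ / C ^ 2 *
      ∏ i, S.piecewise (fun i ↦ |C| * √(g (q i) (q i))) (fun i ↦ √(g (p i) (p i))) i := by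
  have : NeZero m := ⟨by rintro rfl; simp [S.eq_empty_of_isEmpty] at hS⟩
  have hC₀ : 0 < C ^ 2 := by rw [← sq_abs]; positivity
  let c i := √(g (p i) (p i))
  let d i := √(g (q i) (q i))
  calc |φ (S.piecewise q p)| ≤ comass g φ * √(gram g (S.piecewise q p)) :=
        hg.abs_map_le_comass_mul_sqrt_gram φ _
    _ ≤ comass g φ * ∏ i, S.piecewise d c i := by
        gcongr
        refine (hg.sqrt_gram_le_prod _).trans_eq (Finset.prod_congr rfl fun i _ ↦ ?_)
        by_cases hi : i ∈ S <;> simp [hi, c, d]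
    _ = comass g φ / C ^ 2 * (|C| ^ 2 * ∏ i, S.piecewise d c i) := by
        rw [sq_abs, ← mul_assoc, div_mul_cancel₀ _ hC₀.ne']
    _ ≤ comass g φ / C ^ 2 * ∏ i, S.piecewise (|C| • d) c i := by
        gcongr
        exact pow_mul_prod_piecewise_le hC (fun _ ↦ Real.sqrt_nonneg _)
          (fun _ ↦ Real.sqrt_nonneg _) hS

variable {φ : (Fin n → ℝ) [⋀^Fin m]→ₗ[ℝ] ℝ} {v : Fin m → Fin n → ℝ} {W : Submodule ℝ (Fin n → ℝ)}

theorem abs_map_le_prod_of_mem_span (hg : IsInnerProduct g) (hφv : φ v = 1) (hgram : gram g v = 1)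
    {x : Fin m → Fin n → ℝ} (hx : ∀ i, x i ∈ Submodule.span ℝ (Set.range v)) :
    |φ x| ≤ ∏ i, √(g (x i) (x i)) := by
  have h := hg.abs_map_mul_sqrt_gram φ hx
  rw [hgram, hφv, Real.sqrt_one, mul_one, abs_one, one_mul] at h
  exact h.trans_le (hg.sqrt_gram_le_prod x)

theorem abs_map_le_one_of_rescale_self_eq_one (hg : IsInnerProduct g)
    (hcompl : IsCompl (Submodule.span ℝ (Set.range v)) W) (hφv : φ v = 1) (hgram : gram g v = 1)
    (hWvan : ∀ i, ∀ w ∈ W, φ (Function.update v i w) = 0) {C : ℝ} {b : Fin m → Fin n → ℝ}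
    (hb : ∀ i, rescale g (Submodule.projection _ W hcompl) C (b i) (b i) = 1)
    (hC : 2 ^ {i | b i ∉ Submodule.span ℝ (Set.range v)}.ncard * comass g φ ≤ C ^ 2) :
    |φ b| ≤ 1 := by
  classical
  let P := Submodule.projection _ W hcompl
  let p i := P (b i)
  let q i := b i - P (b i)
  let T : Finset (Fin m) := {i | b i ∉ Submodule.span ℝ (Set.range v)}
  have hT : {i | b i ∉ Submodule.span ℝ (Set.range v)}.ncard = T.card := by
    rw [← Set.ncard_coe_finset, Finset.coe_filter_univ]
  have hK : 1 ≤ comass g φ := hφv ▸ hg.map_le_comass φ hgram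
  have hTC : 2 ^ T.card * comass g φ ≤ C ^ 2 := hT ▸ hC
  have hC₁ : 1 ≤ |C| := by
    rw [← one_le_sq_iff_one_le_abs]
    exact (one_le_mul_of_one_le_of_one_le (one_le_pow₀ one_le_two) hK).trans hTC
  have hC₀ : 0 < C ^ 2 := by rw [← sq_abs]; positivity
  have hp (i : Fin m) : p i ∈ Submodule.span ℝ (Set.range v) :=
    Submodule.projection_apply_mem hcompl _
  have hqW (i : Fin m) : q i ∈ W := Submodule.sub_projection_mem hcompl _
  have hqT (i : Fin m) (hi : i ∉ T) : q i = 0 :=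
    sub_eq_zero.mpr (Submodule.projection_apply_of_mem_left hcompl (by simpa [T] using hi)).symm
  have hcs (i : Fin m) : √(g (p i) (p i)) ^ 2 + (|C| * √(g (q i) (q i))) ^ 2 = 1 := by
    rw [mul_pow, sq_abs, Real.sq_sqrt (hg.self_nonneg _), Real.sq_sqrt (hg.self_nonneg _)]
    exact hb i
  have hφ₁ (i : Fin m) : φ (Function.update p i (q i)) = 0 :=
    alternatingMap_update_eq_zero_of_mem_span (fun j ↦ hWvan j _ (hqW i)) hp i
  have hbqp : b = q + p := by ext1 i; simp [p, q]
  rw [hbqp]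
  exact abs_multilinearMap_add_le_one φ.toMultilinearMap hqT (fun _ ↦ Real.sqrt_nonneg _)
    (fun _ ↦ by positivity) (fun i ↦ (hcs i).le)
    (hg.abs_map_le_prod_of_mem_span hφv hgram hp) hφ₁ (δ := comass g φ / C ^ 2) (by positivity)
    (by rwa [← mul_div_assoc, div_le_one hC₀]) fun S hS ↦
      hg.abs_map_piecewise_le (zero_le_one.trans hK) hC₁ p q hS

theorem abs_map_le_one_of_gram_rescale_eq_one (hg : IsInnerProduct g)
    (hcompl : IsCompl (Submodule.span ℝ (Set.range v)) W) (hφv : φ v = 1) (hgram : gram g v = 1)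
    (hWvan : ∀ i, ∀ w ∈ W, φ (Function.update v i w) = 0) {C : ℝ}
    (hC : 2 ^ min m (n - m) * comass g φ ≤ C ^ 2) {u : Fin m → Fin n → ℝ}
    (hu : gram (rescale g (Submodule.projection _ W hcompl) C) u = 1) :
    |φ u| ≤ 1 := by
  have hK : 1 ≤ comass g φ := hφv ▸ hg.map_le_comass φ hgram
  have hC₀ : C ≠ 0 := by
    rintro rfl
    have : 0 < 2 ^ min m (n - m) * comass g φ := by positivity
    linarith
  have hg' := hg.rescale (Submodule.projection _ W hcompl) hC₀
  by_cases hli : LinearIndependent ℝ u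
  swap
  · simp [φ.map_linearDependent u hli]
  obtain ⟨b, hb, hbgram, hspan, hcard⟩ :=
    hg'.exists_gram_eq_one_and_ncard_notMem_add_finrank_le (Submodule.span ℝ (Set.range v)) hli
  have hφub : |φ u| = |φ b| := by
    have h := hg'.abs_map_mul_sqrt_gram φ (v := b) (x := u) fun i ↦
      hspan ▸ Submodule.subset_span ⟨i, rfl⟩
    simpa [hu, hbgram] using h
  have hv : LinearIndependent ℝ v := by
    by_contra h
    simp [φ.map_linearDependent v h] at hφv
  have hfinrank : Module.finrank ℝ (Submodule.span ℝ (Set.range v)) = m := by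
    simpa using finrank_span_eq_card hv
  have hm : {i | b i ∉ Submodule.span ℝ (Set.range v)}.ncard ≤ m := by
    simpa using Set.ncard_le_card {i | b i ∉ Submodule.span ℝ (Set.range v)}
  rw [hφub]
  refine hg.abs_map_le_one_of_rescale_self_eq_one hcompl hφv hgram hWvan hb (le_trans ?_ hC)
  gcongr
  · exact one_le_two
  · omega

end IsInnerProduct

theorem stmt5_general {n m : ℕ} (φ : (Fin n → ℝ) [⋀^Fin m]→ₗ[ℝ] ℝ)
    (v : Fin m → (Fin n → ℝ)) (hφv : φ v = 1) (W : Submodule ℝ (Fin n → ℝ))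
    (hcompl : IsCompl (Submodule.span ℝ (Set.range v)) W)
    (hWvan : ∀ i : Fin m, ∀ w ∈ W, φ (Function.update v i w) = 0)
    (g : (Fin n → ℝ) → (Fin n → ℝ) → ℝ) (hg : IsInnerProduct g) (hgram : gram g v = 1)
    (C : ℝ) (hC : 2 ^ min m (n - m) * comass g φ ≤ C ^ 2) :
    comass (rescale g (Submodule.projection _ W hcompl) C) φ = 1 ∧
      gram (rescale g (Submodule.projection _ W hcompl) C) v = 1 := by
  have hv : gram (rescale g (Submodule.projection _ W hcompl) C) v = 1 := by
    rw [gram_rescale g C (hg.2.1 0).map_zero fun i ↦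
      Submodule.projection_apply_of_mem_left hcompl (Submodule.subset_span ⟨i, rfl⟩), hgram]
  refine ⟨IsGreatest.csSup_eq ⟨⟨v, hv, hφv⟩, ?_⟩, hv⟩
  rintro _ ⟨u, hu, rfl⟩
  exact (le_abs_self _).trans
    (hg.abs_map_le_one_of_gram_rescale_eq_one hcompl hφv hgram hWvan hC hu)

/-- Harvey–Lawson comass normalization: with `V = span{v₁,…,v_m}`, `W` the
unique complement on which `φ(v₁,…,v_{i-1},·,v_{i+1},…,v_m)` vanishes, and `g`
an inner product making `V ⊥ W` with `Gram_g(v₁,…,v_m) = 1`, let `K` be the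
comass of `φ` with respect to `g`.  For any `C` with `C² > (n choose m) · K`,
the rescaled inner product `g'(x,y) = g(x_V,y_V) + C²·g(x_W,y_W)` gives `φ`
comass exactly `1`, attained at `(v₁,…,v_m)`. -/
theorem stmt5 {n m : ℕ} (hm : 1 ≤ m) (hmn : m ≤ n)
    (φ : (Fin n → ℝ) [⋀^Fin m]→ₗ[ℝ] ℝ)
    (v : Fin m → (Fin n → ℝ)) (hli : LinearIndependent ℝ v) (hφv : φ v = 1)
    (W : Submodule ℝ (Fin n → ℝ))
    (hcompl : IsCompl (Submodule.span ℝ (Set.range v)) W)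
    (hWvan : ∀ i : Fin m, ∀ w ∈ W, φ (Function.update v i w) = 0)
    (g : (Fin n → ℝ) → (Fin n → ℝ) → ℝ) (hg : IsInnerProduct g)
    (horth : ∀ x ∈ Submodule.span ℝ (Set.range v), ∀ y ∈ W, g x y = 0)
    (hgram : gram g v = 1)
    (K : ℝ)
    (hK : K = sSup {r : ℝ | ∃ u : Fin m → (Fin n → ℝ), gram g u = 1 ∧ φ u = r})
    (C : ℝ) (hC : (n.choose m : ℝ) * K < C ^ 2)
    (g' : (Fin n → ℝ) → (Fin n → ℝ) → ℝ)
    (hg' : ∀ x y, g' x y =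
      g ((Submodule.linearProjOfIsCompl (Submodule.span ℝ (Set.range v)) W hcompl x : Fin n → ℝ))
        ((Submodule.linearProjOfIsCompl (Submodule.span ℝ (Set.range v)) W hcompl y : Fin n → ℝ)) +
      C ^ 2 *
        g (x - (Submodule.linearProjOfIsCompl (Submodule.span ℝ (Set.range v)) W hcompl x : Fin n → ℝ))
          (y - (Submodule.linearProjOfIsCompl (Submodule.span ℝ (Set.range v)) W hcompl y : Fin n → ℝ))) :
    sSup {r : ℝ | ∃ u : Fin m → (Fin n → ℝ), gram g' u = 1 ∧ φ u = r} = 1 ∧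
      φ v = 1 ∧ gram g' v = 1 := by
  subst hK
  obtain rfl : g' = rescale g (Submodule.projection _ W hcompl) C := funext₂ hg'
  have hK : 0 ≤ comass g φ := zero_le_one.trans (hφv ▸ hg.map_le_comass φ hgram)
  have hC' : 2 ^ min m (n - m) * comass g φ ≤ C ^ 2 :=
    (mul_le_mul_of_nonneg_right (mod_cast two_pow_min_le_choose hmn) hK).trans hC.le
  obtain ⟨hcomass, hgram'⟩ := stmt5_general φ v hφv W hcompl hWvan g hg hgram C hC'
  exact ⟨hcomass, hφv, hgram'⟩
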